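/- arXiv:1907.03333 — 3 statements merged into one kernel-verified Lean document; each statement's English description precedes it below -/
import Mathlib

section
/- For every real η > 0, one has 2π √η e^{2η³/3} Ai(η²) = ∫_{-∞}^{∞} e^{-t²} cos( t³/(3 η^{3/2}) ) dt, where the integral is an absolutely convergent Lebesgue integral. -/
open Filter MeasureTheory Real

/-- The Airy function, defined for real `x` by
`Ai(x) = (2π)⁻¹ · lim_{R→∞} ∫_{-R}^{R} e^{i(t³/3 + x t)} dt`. -/
noncomputable def Ai (x : ℝ) : ℂ :=
  ((2 * Real.pi : ℝ)⁻¹ : ℂ) * limUnder Filter.atTop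
    (fun R : ℝ => ∫ t in (-R)..R, Complex.exp (Complex.I * ((t : ℂ)^3 / 3 + (x : ℂ) * t)))

/-!
On the line `Im z = h > 0` the integrand `exp (i (z³/3 + x z))` decays like a Gaussian, and Cauchy's
theorem moves the conditionally convergent Airy integral there. For `x = η²` the line `Im z = η`
passes through the saddle point `iη`: the linear term of the phase cancels, and what remains is the
constant `-2η³/3`, the Gaussian `-η s²` and the odd phase `s³/3`, of which only the cosine
contributes. Rescaling `s` by `√η` gives the formula.
-/

section Integrals

open scoped Topology ComplexConjugate

theorem tendsto_intervalIntegral_integral_add_mul_I {E : Type*} [NormedAddCommGroup E]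
    [NormedSpace ℂ E] {f : ℂ → E} (hf : Differentiable ℂ f) {h : ℝ}
    (hint : Integrable fun t : ℝ => f (t + h * Complex.I))
    (hvert : Tendsto (fun s : ℝ => ∫ y in (0 : ℝ)..h, f (s + y * Complex.I))
      (cocompact ℝ) (𝓝 0)) :
    Tendsto (fun R : ℝ => ∫ t in (-R)..R, f t) atTop (𝓝 (∫ t : ℝ, f (t + h * Complex.I))) := by
  have hright : Tendsto (fun R : ℝ => ∫ y in (0 : ℝ)..h, f (R + y * Complex.I)) atTop (𝓝 0) :=
    hvert.mono_left atTop_le_cocompact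
  have hleft : Tendsto (fun R : ℝ => ∫ y in (0 : ℝ)..h, f ((-R : ℝ) + y * Complex.I))
      atTop (𝓝 0) :=
    (hvert.mono_left atBot_le_cocompact).comp tendsto_neg_atTop_atBot
  have htop : Tendsto (fun R : ℝ => ∫ t in (-R)..R, f (t + h * Complex.I)) atTop
      (𝓝 (∫ t : ℝ, f (t + h * Complex.I))) :=
    intervalIntegral_tendsto_integral hint tendsto_neg_atTop_atBot tendsto_id
  have hcauchy (R : ℝ) : (∫ t in (-R)..R, f (t + h * Complex.I))
      - Complex.I • (∫ y in (0 : ℝ)..h, f (R + y * Complex.I))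
      + Complex.I • (∫ y in (0 : ℝ)..h, f ((-R : ℝ) + y * Complex.I)) = ∫ t in (-R)..R, f t := by
    have hrect := Complex.integral_boundary_rect_eq_zero_of_differentiableOn f
      ⟨-R, 0⟩ ⟨R, h⟩ hf.differentiableOn
    simp only [Complex.ofReal_zero, zero_mul, add_zero] at hrect
    rw [← sub_eq_zero, ← neg_eq_zero, ← hrect]
    abel
  simpa only [hcauchy, smul_zero, sub_zero, add_zero] using
    (htop.sub (hright.const_smul Complex.I)).add (hleft.const_smul Complex.I)

theorem integral_eq_ofReal_integral_re_of_neg_eq_conj {G 𝕜 : Type*} [RCLike 𝕜]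
    [MeasurableSpace G] [AddGroup G] [MeasurableNeg G] {μ : Measure G} [μ.IsNegInvariant]
    {f : G → 𝕜} (hf : Integrable f μ) (hconj : ∀ t, f (-t) = conj (f t)) :
    ∫ t, f t ∂μ = ((∫ t, RCLike.re (f t) ∂μ : ℝ) : 𝕜) := by
  have hreal : conj (∫ t, f t ∂μ) = ∫ t, f t ∂μ := by
    rw [← integral_conj, ← integral_neg_eq_self f μ]
    simp only [hconj]
  rw [integral_re hf, RCLike.conj_eq_iff_re.mp hreal]

theorem integral_ofReal_mul_exp_mul_I_of_even_of_odd {G : Type*} [MeasurableSpace G]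
    [AddGroup G] [MeasurableNeg G] {μ : Measure G} [μ.IsNegInvariant] {g φ : G → ℝ}
    (hg : Integrable g μ) (hg_even : g.Even) (hφ : AEStronglyMeasurable φ μ) (hφ_odd : φ.Odd) :
    ∫ t, (g t : ℂ) * Complex.exp (φ t * Complex.I) ∂μ = ((∫ t, g t * cos (φ t) ∂μ : ℝ) : ℂ) := by
  have hmeas : AEStronglyMeasurable (fun t => Complex.exp (φ t * Complex.I)) μ :=
    (by fun_prop : Continuous fun u : ℝ => Complex.exp (u * Complex.I)).comp_aestronglyMeasurable hφ
  have hint : Integrable (fun t => (g t : ℂ) * Complex.exp (φ t * Complex.I)) μ :=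
    hg.ofReal.mul_bdd hmeas
      (Eventually.of_forall fun t => (Complex.norm_exp_ofReal_mul_I (φ t)).le)
  rw [integral_eq_ofReal_integral_re_of_neg_eq_conj hint fun t => by
    simp [hg_even t, hφ_odd t, ← Complex.exp_conj]]
  simp [Complex.exp_ofReal_mul_I_re]

theorem integrable_mul_cos {α : Type*} [MeasurableSpace α] {μ : Measure α} {g φ : α → ℝ}
    (hg : Integrable g μ) (hφ : AEStronglyMeasurable φ μ) :
    Integrable (fun t => g t * cos (φ t)) μ :=
  hg.mul_bdd (continuous_cos.comp_aestronglyMeasurable hφ)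
    (.of_forall fun t => abs_cos_le_one (φ t))

end Integrals

section AiryIntegral

open scoped Topology

/-- The integrand `exp (i (z³/3 + x z))` of the Airy integral, extended to complex `z` so that the
contour of integration can be moved off the real axis. -/
noncomputable def airyIntegrand (x : ℝ) (z : ℂ) : ℂ :=
  Complex.exp (Complex.I * (z ^ 3 / 3 + x * z))

theorem differentiable_airyIntegrand (x : ℝ) : Differentiable ℂ (airyIntegrand x) := by
  unfold airyIntegrand
  fun_prop

theorem continuous_airyIntegrand (x : ℝ) : Continuous (airyIntegrand x) :=
  (differentiable_airyIntegrand x).continuous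

theorem airyIntegrand_add_mul_I (x s y : ℝ) :
    airyIntegrand x (s + y * Complex.I) =
      (exp (y ^ 3 / 3 - x * y) * exp (-y * s ^ 2) : ℝ) *
        Complex.exp ((s ^ 3 / 3 + (x - y ^ 2) * s : ℝ) * Complex.I) := by
  rw [airyIntegrand, ← Real.exp_add, Complex.ofReal_exp, ← Complex.exp_add]
  congr 1
  push_cast
  linear_combination ((s : ℂ) ^ 2 * y + s * y ^ 2 * Complex.I + x * y
    + y ^ 3 / 3 * (Complex.I ^ 2 - 1)) * Complex.I_sq

theorem norm_airyIntegrand_add_mul_I (x s y : ℝ) :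
    ‖airyIntegrand x (s + y * Complex.I)‖ = exp (y ^ 3 / 3 - x * y) * exp (-y * s ^ 2) := by
  rw [airyIntegrand_add_mul_I, norm_mul, Complex.norm_exp_ofReal_mul_I, mul_one,
    Complex.norm_of_nonneg (by positivity)]

theorem integrable_airyIntegrand_add_mul_I (x : ℝ) {h : ℝ} (hh : 0 < h) :
    Integrable fun t : ℝ => airyIntegrand x (t + h * Complex.I) := by
  have hcont : Continuous fun t : ℝ => airyIntegrand x (t + h * Complex.I) :=
    (continuous_airyIntegrand x).comp (by fun_prop)
  rw [← integrable_norm_iff hcont.aestronglyMeasurable]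
  simp only [norm_airyIntegrand_add_mul_I]
  exact (integrable_exp_neg_mul_sq hh).const_mul _

theorem tendsto_airyIntegrand_add_mul_I_cocompact (x : ℝ) {y : ℝ} (hy : 0 < y) :
    Tendsto (fun s : ℝ => airyIntegrand x (s + y * Complex.I)) (cocompact ℝ) (𝓝 0) := by
  have hsq : Tendsto (fun s : ℝ => s ^ 2) (cocompact ℝ) atTop := by
    simpa only [Function.comp_def, norm_eq_abs, sq_abs] using
      (tendsto_pow_atTop two_ne_zero).comp (tendsto_norm_cocompact_atTop (E := ℝ))
  rw [tendsto_zero_iff_norm_tendsto_zero]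
  simp only [norm_airyIntegrand_add_mul_I]
  simpa only [mul_zero, Function.comp_def] using
    (tendsto_exp_atBot.comp (hsq.const_mul_atTop_of_neg (neg_neg_of_pos hy))).const_mul
      (exp (y ^ 3 / 3 - x * y))

theorem tendsto_integral_vertical_airyIntegrand (x : ℝ) {h : ℝ} (hh : 0 ≤ h) :
    Tendsto (fun s : ℝ => ∫ y in (0 : ℝ)..h, airyIntegrand x (s + y * Complex.I))
      (cocompact ℝ) (𝓝 0) := by
  have : (cocompact ℝ).IsCountablyGenerated := by
    rw [cocompact_eq_atBot_atTop]
    infer_instance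
  have hcont (s : ℝ) : Continuous fun y : ℝ => airyIntegrand x (s + y * Complex.I) :=
    (continuous_airyIntegrand x).comp (by fun_prop)
  have hbound_cont : Continuous fun y : ℝ => exp (y ^ 3 / 3 - x * y) := by fun_prop
  have hlim : Tendsto (fun s : ℝ => ∫ y in (0 : ℝ)..h, airyIntegrand x (s + y * Complex.I))
      (cocompact ℝ) (𝓝 (∫ _ in (0 : ℝ)..h, (0 : ℂ))) := by
    refine intervalIntegral.tendsto_integral_filter_of_dominated_convergence
      (fun y => exp (y ^ 3 / 3 - x * y)) (.of_forall fun s => (hcont s).aestronglyMeasurable)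
      (.of_forall fun s => .of_forall fun y hy => ?_) (hbound_cont.intervalIntegrable _ _)
      (.of_forall fun y hy => ?_) <;> rw [Set.uIoc_of_le hh] at hy
    · rw [norm_airyIntegrand_add_mul_I]
      refine mul_le_of_le_one_right (exp_pos _).le (exp_le_one_iff.mpr ?_)
      exact mul_nonpos_of_nonpos_of_nonneg (neg_nonpos.mpr hy.1.le) (sq_nonneg s)
    · exact tendsto_airyIntegrand_add_mul_I_cocompact x hy.1
  simpa only [intervalIntegral.integral_zero] using hlim

theorem two_pi_mul_Ai_eq_integral (x : ℝ) {h : ℝ} (hh : 0 < h) :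
    ((2 * π : ℝ) : ℂ) * Ai x = ∫ t : ℝ, airyIntegrand x (t + h * Complex.I) := by
  have hlim : Tendsto (fun R : ℝ => ∫ t in (-R)..R, airyIntegrand x t) atTop
      (𝓝 (∫ t : ℝ, airyIntegrand x (t + h * Complex.I))) :=
    tendsto_intervalIntegral_integral_add_mul_I (differentiable_airyIntegrand x)
      (integrable_airyIntegrand_add_mul_I x hh) (tendsto_integral_vertical_airyIntegrand x hh.le)
  have htwo_pi : ((2 * π : ℝ) : ℂ) ≠ 0 := Complex.ofReal_ne_zero.mpr two_pi_pos.ne'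
  simp only [airyIntegrand] at hlim ⊢
  rw [Ai, hlim.limUnder_eq, mul_inv_cancel_left₀ htwo_pi]

theorem two_pi_mul_Ai_sq {η : ℝ} (hη : 0 < η) :
    ((2 * π : ℝ) : ℂ) * Ai (η ^ 2) =
      (exp (-(2 * η ^ 3 / 3)) * ∫ s : ℝ, exp (-η * s ^ 2) * cos (s ^ 3 / 3) : ℝ) := by
  have hsaddle (s : ℝ) : airyIntegrand (η ^ 2) (s + η * Complex.I) =
      exp (-(2 * η ^ 3 / 3)) *
        ((exp (-η * s ^ 2) : ℝ) * Complex.exp ((s ^ 3 / 3 : ℝ) * Complex.I)) := by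
    rw [airyIntegrand_add_mul_I, sub_self, zero_mul, add_zero, Complex.ofReal_mul, mul_assoc]
    ring_nf
  have heven : (fun s : ℝ => exp (-η * s ^ 2)).Even := fun s => by simp only [neg_sq]
  have hodd : (fun s : ℝ => s ^ 3 / 3).Odd := fun s => by ring
  rw [two_pi_mul_Ai_eq_integral (η ^ 2) hη]
  simp only [hsaddle]
  rw [integral_const_mul, integral_ofReal_mul_exp_mul_I_of_even_of_odd
    (integrable_exp_neg_mul_sq hη) heven (by fun_prop) hodd, Complex.ofReal_mul]

end AiryIntegral

theorem sqrt_mul_integral_exp_neg_mul_sq_mul_cos {η : ℝ} (hη : 0 < η) :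
    √η * ∫ s : ℝ, exp (-η * s ^ 2) * cos (s ^ 3 / 3) =
      ∫ t : ℝ, exp (-t ^ 2) * cos (t ^ 3 / (3 * η ^ ((3 : ℝ) / 2))) := by
  have hsqrt : 0 < √η := sqrt_pos.mpr hη
  have hcube : η ^ ((3 : ℝ) / 2) = √η ^ 3 := by
    rw [sqrt_eq_rpow, ← rpow_mul_natCast hη.le]
    norm_num
  have hscale (s : ℝ) : exp (-η * s ^ 2) * cos (s ^ 3 / 3) =
      exp (-(√η * s) ^ 2) * cos ((√η * s) ^ 3 / (3 * η ^ ((3 : ℝ) / 2))) := by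
    rw [hcube, mul_pow, sq_sqrt hη.le, neg_mul, mul_pow, mul_comm 3,
      mul_div_mul_left _ _ (pow_pos hsqrt 3).ne']
  simp only [hscale]
  rw [Measure.integral_comp_mul_left
      (fun t => exp (-t ^ 2) * cos (t ^ 3 / (3 * η ^ ((3 : ℝ) / 2)))),
    abs_of_pos (inv_pos.mpr hsqrt), smul_eq_mul, mul_inv_cancel_left₀ hsqrt.ne']

/-- For every real `η > 0`,
`2π √η e^{2η³/3} Ai(η²) = ∫_{-∞}^{∞} e^{-t²} cos(t³/(3 η^{3/2})) dt`,
the integral being absolutely convergent. -/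
theorem airy_real_integral_formula (η : ℝ) (hη : 0 < η) :
    MeasureTheory.Integrable
      (fun t : ℝ => Real.exp (-t^2) * Real.cos (t^3 / (3 * η ^ ((3:ℝ)/2)))) ∧
    ((2 * Real.pi * Real.sqrt η * Real.exp (2 * η^3 / 3) : ℝ) : ℂ) * Ai (η^2) =
      ((∫ t : ℝ, Real.exp (-t^2) * Real.cos (t^3 / (3 * η ^ ((3:ℝ)/2))) : ℝ) : ℂ) := by
  have hgauss : Integrable fun t : ℝ => exp (-t ^ 2) := by
    simpa only [neg_one_mul] using integrable_exp_neg_mul_sq one_pos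
  refine ⟨integrable_mul_cos hgauss (by fun_prop), ?_⟩
  calc ((2 * π * √η * exp (2 * η ^ 3 / 3) : ℝ) : ℂ) * Ai (η ^ 2)
    _ = ((√η * exp (2 * η ^ 3 / 3) : ℝ) : ℂ) * (((2 * π : ℝ) : ℂ) * Ai (η ^ 2)) := by
      push_cast
      ring
    _ = ((√η * ∫ s : ℝ, exp (-η * s ^ 2) * cos (s ^ 3 / 3) : ℝ) : ℂ) := by
      rw [two_pi_mul_Ai_sq hη, ← Complex.ofReal_mul, mul_assoc (√η), ← mul_assoc (exp _),
        ← Real.exp_add, add_neg_cancel, Real.exp_zero, one_mul]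
    _ = _ := by rw [sqrt_mul_integral_exp_neg_mul_sq_mul_cos hη]
end

section
/- Let k₀ > 0 and κ be real numbers with 0 ≤ κ ≤ k₀/√3, let f > 0, and set k = e^{-iπ/3}(k₀ - iκ). Then |exp(4 i k³/(3 f))| ≤ exp(-8 |k|² κ / (3 f)). -/
/-!
For `z = k₀ - iκ` one has `Im z³ = 2 |z|² Im z + Im z (Re² z - 3 Im² z)`. Multiplication by a
cube root of `-1`, such as `e^{-iπ/3}`, preserves `|z|` and changes the sign of `z³`, so the two
exponents differ by `4 κ (k₀² - 3 κ²) / (3 f)`, which is nonnegative when `0 ≤ κ ≤ k₀/√3`.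
-/

theorem im_pow_three (z : ℂ) :
    (z ^ 3).im = 2 * ‖z‖ ^ 2 * z.im + z.im * (z.re ^ 2 - 3 * z.im ^ 2) := by
  rw [Complex.sq_norm, Complex.normSq_apply]
  simp only [pow_succ, pow_zero, one_mul, Complex.mul_im, Complex.mul_re]
  ring

theorem norm_exp_I_mul (w : ℂ) : ‖Complex.exp (Complex.I * w)‖ = Real.exp (-w.im) := by
  rw [Complex.norm_exp, Complex.I_mul_re]

theorem norm_eq_one_of_pow_eq_neg_one {ζ : ℂ} {n : ℕ} (hζ : ζ ^ n = -1) (hn : n ≠ 0) :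
    ‖ζ‖ = 1 := by
  have norm_pow_eq : ‖ζ‖ ^ n = 1 := by rw [← norm_pow, hζ, norm_neg, norm_one]
  exact (pow_eq_one_iff_of_nonneg (norm_nonneg ζ) hn).1 norm_pow_eq

theorem exp_neg_I_mul_pi_div_pow {n : ℕ} (hn : n ≠ 0) :
    Complex.exp (-(Complex.I * Real.pi / n)) ^ n = -1 := by
  have hn' : (n : ℂ) ≠ 0 := Nat.cast_ne_zero.2 hn
  rw [← Complex.exp_nat_mul, ← Complex.exp_neg_pi_mul_I]
  congr 1
  field_simp

theorem mul_sq_le_sq_of_le_div_sqrt {a x y : ℝ} (ha : 0 < a) (hx : 0 ≤ x)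
    (hxy : x ≤ y / Real.sqrt a) : a * x ^ 2 ≤ y ^ 2 := by
  have sq_le : x ^ 2 ≤ y ^ 2 / a := by
    simpa only [div_pow, Real.sq_sqrt ha.le] using pow_le_pow_left₀ hx hxy 2
  exact (le_div_iff₀' ha).1 sq_le

theorem abs_exp_le_line_general (k₀ κ f : ℝ) (hf : 0 < f) (ζ : ℂ) (hζ : ζ ^ 3 = -1)
    (k : ℂ) (hk : k = ζ * ((k₀ : ℂ) - Complex.I * κ)) :
    ‖Complex.exp (4 * Complex.I * k ^ 3 / (3 * (f : ℂ)))‖ ≤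
      Real.exp (-8 * ‖k‖ ^ 2 * κ / (3 * f)) ↔ 0 ≤ κ * (k₀ ^ 2 - 3 * κ ^ 2) := by
  set z : ℂ := (k₀ : ℂ) - Complex.I * κ with hz
  have z_re : z.re = k₀ := by simp [hz]
  have z_im : z.im = -κ := by simp [hz]
  have norm_k : ‖k‖ = ‖z‖ := by
    rw [hk, norm_mul, norm_eq_one_of_pow_eq_neg_one hζ three_ne_zero, one_mul]
  have k_cube_im : (k ^ 3).im = 2 * ‖k‖ ^ 2 * κ + κ * (k₀ ^ 2 - 3 * κ ^ 2) := by
    rw [hk, mul_pow, hζ, neg_one_mul, Complex.neg_im, im_pow_three, ← hk, norm_k, z_re, z_im]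
    ring
  have norm_exp_eq : ‖Complex.exp (4 * Complex.I * k ^ 3 / (3 * (f : ℂ)))‖ =
      Real.exp (-4 * (k ^ 3).im / (3 * f)) := by
    have exponent_eq : 4 * Complex.I * k ^ 3 / (3 * (f : ℂ)) =
        Complex.I * (((4 / (3 * f) : ℝ) : ℂ) * k ^ 3) := by
      push_cast
      ring
    rw [exponent_eq, norm_exp_I_mul, Complex.im_ofReal_mul]
    ring_nf
  rw [norm_exp_eq, Real.exp_le_exp, div_le_div_iff_of_pos_right (by positivity), k_cube_im]
  constructor <;> intro h <;> linarith

/-- Let `k₀ > 0` and `0 ≤ κ ≤ k₀/√3`, let `f > 0`, and set `k = e^{-iπ/3}(k₀ - iκ)`.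
Then `|exp(4 i k³/(3 f))| ≤ exp(-8 |k|² κ / (3 f))`. -/
theorem abs_exp_le_line (k₀ κ f : ℝ) (hk₀ : 0 < k₀) (hκ : 0 ≤ κ)
    (hκ' : κ ≤ k₀ / Real.sqrt 3) (hf : 0 < f)
    (k : ℂ) (hk : k = Complex.exp (-(Complex.I * Real.pi / 3)) * ((k₀ : ℂ) - Complex.I * κ)) :
    ‖Complex.exp (4 * Complex.I * k^3 / (3 * (f : ℂ)))‖ ≤
      Real.exp (-8 * ‖k‖^2 * κ / (3 * f)) :=
  (abs_exp_le_line_general k₀ κ f hf _ (exp_neg_I_mul_pi_div_pow three_ne_zero) k hk).2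
    (mul_nonneg hκ (sub_nonneg.2 (mul_sq_le_sq_of_le_div_sqrt three_pos hκ hκ')))
end

section
/- Let L > 0, let V : ℝ → ℝ be continuous with support contained in [-L, L], let λ ∈ ℝ, and let ψ : ℝ → ℂ be twice continuously differentiable, square integrable on ℝ, not identically zero, and satisfy -ψ''(x) + V(x)ψ(x) = λ ψ(x) for all x. Then λ < 0. -/
open MeasureTheory

/-!
Suppose `0 ≤ λ`. To the right of the support of `V` the equation is `ψ'' = -λ ψ`, and no nonzero
solution of it is `p`-integrable at infinity, where `0 < p < ∞`. If `λ = 0`, then `ψ` is affine, so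
its slope, being a difference of two translates of `ψ`, is an `Lᵖ` constant and vanishes; then `ψ`
itself is an `Lᵖ` constant. If `λ = k² > 0`, then `ψ'` is `-k` times a quarter-period translate of
`ψ`, so `ψ'` is in `Lᵖ` as well; hence so is the Wronskian of `sin (k (x - y))` with `ψ`, which is
the constant `-k ψ(y)`, and `ψ(y) = 0`. Thus `ψ` vanishes on a half-line, and by uniqueness for the
Cauchy problem it vanishes everywhere.
-/

theorem eq_of_hasDerivWithinAt_eq_zero {E : Type*} [NormedAddCommGroup E] [NormedSpace ℝ E]
    {f : ℝ → E} {s : Set ℝ} (hs : Convex ℝ s) (hf : ∀ x ∈ s, HasDerivWithinAt f 0 s x)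
    {x y : ℝ} (hx : x ∈ s) (hy : y ∈ s) : f x = f y := by
  have hle : ‖f x - f y‖ ≤ 0 * ‖x - y‖ :=
    hs.norm_image_sub_le_of_norm_hasDerivWithin_le hf (by simp) hy hx
  rwa [zero_mul, norm_le_zero_iff, sub_eq_zero] at hle

theorem eq_zero_of_memLp_of_eqOn_const {α E : Type*} [MeasurableSpace α] [NormedAddCommGroup E]
    {μ : Measure α} {p : ENNReal} (hp₀ : p ≠ 0) (hp : p ≠ ⊤) {s : Set α} (hs : MeasurableSet s)
    (hμs : μ s = ⊤) {f : α → E} {c : E} (hf : MemLp f p (μ.restrict s))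
    (hfc : Set.EqOn f (fun _ ↦ c) s) : c = 0 := by
  have hc : MemLp (fun _ : α ↦ c) p (μ.restrict s) := hf.ae_eq (hfc.aeEq_restrict hs)
  simpa [memLp_const_iff hp₀ hp, hμs] using hc

theorem memLp_comp_sub_const_Ici {E : Type*} [NormedAddCommGroup E] {p : ENNReal} {f : ℝ → E}
    {b : ℝ} (hf : MemLp f p (volume.restrict (Set.Ici b))) (h : ℝ) :
    MemLp (fun x ↦ f (x - h)) p (volume.restrict (Set.Ici (b + h))) := by
  have hshift := (measurePreserving_sub_right volume h).restrict_preimage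
    (measurableSet_Ici (a := b))
  rw [Set.preimage_sub_const_Ici] at hshift
  exact hf.comp_measurePreserving hshift

variable {E : Type*} [NormedAddCommGroup E] [NormedSpace ℝ E]

/-- The pair `(ψ, ψ')` solves on `s` the first-order system of the Schrödinger equation
`ψ'' = W ψ`, where `W = V - λ` for the potential `V` and the energy `λ`. The derivative `ψ'` is part
of the data, and at the boundary of `s` derivatives are taken within `s`. -/
structure IsSchrodingerSolutionOn (W : ℝ → ℝ) (s : Set ℝ) (ψ ψ' : ℝ → E) : Prop where
  hasDerivWithinAt : ∀ x ∈ s, HasDerivWithinAt ψ (ψ' x) s x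
  hasDerivWithinAt_deriv : ∀ x ∈ s, HasDerivWithinAt ψ' (W x • ψ x) s x

/-- The Wronskian `f ψ' - f' ψ` of a scalar pair `(f, f')` and a vector-valued pair `(ψ, ψ')`. -/
def wronskian (f f' : ℝ → ℝ) (ψ ψ' : ℝ → E) (x : ℝ) : E :=
  f x • ψ' x - f' x • ψ x

theorem isSchrodingerSolutionOn_sin (k y : ℝ) (s : Set ℝ) :
    IsSchrodingerSolutionOn (fun _ ↦ -k ^ 2) s
      (fun x ↦ Real.sin (k * (x - y))) (fun x ↦ k * Real.cos (k * (x - y))) := by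
  have hphase (x : ℝ) : HasDerivAt (fun x ↦ k * (x - y)) k x := by
    simpa using ((hasDerivAt_id x).sub_const y).const_mul k
  refine ⟨fun x _ ↦ ?_, fun x _ ↦ ?_⟩
  · exact (hphase x).sin.congr_deriv (mul_comm _ _) |>.hasDerivWithinAt
  · refine ((hphase x).cos.const_mul k).congr_deriv ?_ |>.hasDerivWithinAt
    rw [smul_eq_mul]
    ring

theorem memLp_wronskian {μ : Measure ℝ} {p : ENNReal} {f f' : ℝ → ℝ} {ψ ψ' : ℝ → E}
    (hf : MemLp f ⊤ μ) (hf' : MemLp f' ⊤ μ) (hψ : MemLp ψ p μ) (hψ' : MemLp ψ' p μ) :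
    MemLp (wronskian f f' ψ ψ') p μ :=
  (hψ'.smul hf).sub (hψ.smul hf')

namespace IsSchrodingerSolutionOn

variable {W : ℝ → ℝ} {s : Set ℝ} {ψ ψ' : ℝ → E}

theorem congr_mono {W₀ : ℝ → ℝ} {t : Set ℝ} (hψ : IsSchrodingerSolutionOn W s ψ ψ') (hts : t ⊆ s)
    (hW : Set.EqOn W W₀ t) : IsSchrodingerSolutionOn W₀ t ψ ψ' where
  hasDerivWithinAt x hx := (hψ.hasDerivWithinAt x (hts hx)).mono hts
  hasDerivWithinAt_deriv x hx := hW hx ▸ (hψ.hasDerivWithinAt_deriv x (hts hx)).mono hts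

theorem eq_zero_of_initial_eq_zero (hψ : IsSchrodingerSolutionOn W Set.univ ψ ψ')
    (hW : Continuous W) {a : ℝ} (ha : ψ a = 0) (ha' : ψ' a = 0) : ψ = 0 := by
  ext x
  obtain ⟨c, d, hx, hac⟩ : ∃ c d, x ∈ Set.Ioo c d ∧ a ∈ Set.Ioo c d :=
    ⟨min x a - 1, max x a + 1, by grind, by grind⟩
  obtain ⟨C, hC⟩ := (isCompact_Icc (a := c) (b := d)).exists_bound_of_continuousOn hW.continuousOn
  let v (t : ℝ) (u : E × E) : E × E := (u.2, W t • u.1)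
  have hv (t : ℝ) (ht : t ∈ Set.Ioo c d) :
      LipschitzOnWith (max 1 C.toNNReal) (v t) Set.univ := by
    have hWt : ‖W t‖₊ ≤ C.toNNReal := by
      simpa [← norm_toNNReal] using Real.toNNReal_le_toNNReal (hC t (Set.Ioo_subset_Icc_self ht))
    have hlip : LipschitzWith (max 1 (‖W t‖₊ * 1)) (v t) :=
      LipschitzWith.prod_snd.prodMk ((lipschitzWith_smul (W t)).comp LipschitzWith.prod_fst)
    rw [mul_one] at hlip
    exact (hlip.weaken (max_le_max_left 1 hWt)).lipschitzOnWith
  have hsol (t : ℝ) : HasDerivAt (fun t ↦ (ψ t, ψ' t)) (v t (ψ t, ψ' t)) t :=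
    (hasDerivWithinAt_univ.1 (hψ.hasDerivWithinAt t trivial)).prodMk
      (hasDerivWithinAt_univ.1 (hψ.hasDerivWithinAt_deriv t trivial))
  have hzero (t : ℝ) : HasDerivAt (fun _ ↦ (0 : E × E)) (v t 0) t := by
    simpa only [v, Prod.fst_zero, Prod.snd_zero, smul_zero, Prod.mk_zero_zero] using
      hasDerivAt_const t (0 : E × E)
  have hEqOn := ODE_solution_unique_of_mem_Ioo hv hac (fun t _ ↦ ⟨hsol t, trivial⟩)
    (fun t _ ↦ ⟨hzero t, trivial⟩) (by simp [ha, ha'])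
  exact congrArg Prod.fst (hEqOn hx)

theorem wronskian_eq {f f' : ℝ → ℝ} (hf : IsSchrodingerSolutionOn W s f f')
    (hψ : IsSchrodingerSolutionOn W s ψ ψ') (hs : Convex ℝ s) {x y : ℝ} (hx : x ∈ s)
    (hy : y ∈ s) : wronskian f f' ψ ψ' x = wronskian f f' ψ ψ' y := by
  refine eq_of_hasDerivWithinAt_eq_zero hs (fun z hz ↦ ?_) hx hy
  refine (((hf.hasDerivWithinAt z hz).smul (hψ.hasDerivWithinAt_deriv z hz)).sub
    ((hf.hasDerivWithinAt_deriv z hz).smul (hψ.hasDerivWithinAt z hz))).congr_deriv ?_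
  simp only [smul_eq_mul]
  module

variable {b k : ℝ} {p : ENNReal}

theorem eqOn_zero_of_free (hψ : IsSchrodingerSolutionOn (fun _ ↦ 0) (Set.Ici b) ψ ψ')
    (hp₀ : p ≠ 0) (hp : p ≠ ⊤) (hψp : MemLp ψ p (volume.restrict (Set.Ici b))) :
    Set.EqOn ψ 0 (Set.Ici b) := by
  have hslope {x : ℝ} (hx : x ∈ Set.Ici b) : ψ' x = ψ' b :=
    eq_of_hasDerivWithinAt_eq_zero (convex_Ici b)
      (fun y hy ↦ by simpa using hψ.hasDerivWithinAt_deriv y hy) hx Set.self_mem_Ici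
  have haffine {x : ℝ} (hx : x ∈ Set.Ici b) : ψ x - x • ψ' b = ψ b - b • ψ' b := by
    refine eq_of_hasDerivWithinAt_eq_zero (f := fun x ↦ ψ x - x • ψ' b) (convex_Ici b)
      (fun y hy ↦ ?_) hx Set.self_mem_Ici
    exact ((hψ.hasDerivWithinAt y hy).sub
      ((hasDerivWithinAt_id y _).smul_const (ψ' b))).congr_deriv (by simp [hslope hy])
  have hslope_zero : ψ' b = 0 := by
    have hdiff : MemLp (fun x ↦ ψ x - ψ (x - 1)) p (volume.restrict (Set.Ici (b + 1))) :=
      (hψp.mono_measure (Measure.restrict_mono (Set.Ici_subset_Ici.2 (by simp)) le_rfl)).sub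
        (memLp_comp_sub_const_Ici hψp 1)
    refine eq_zero_of_memLp_of_eqOn_const hp₀ hp measurableSet_Ici Real.volume_Ici hdiff
      fun x (hx : b + 1 ≤ x) ↦ ?_
    have h₁ := haffine (x := x) (Set.mem_Ici.2 (by linarith))
    have h₂ := haffine (x := x - 1) (Set.mem_Ici.2 (by linarith))
    linear_combination (norm := module) h₁ - h₂
  have hconst : Set.EqOn ψ (fun _ ↦ ψ b) (Set.Ici b) :=
    fun x hx ↦ by simpa [hslope_zero] using haffine hx
  intro x hx
  rw [hconst hx]
  exact eq_zero_of_memLp_of_eqOn_const hp₀ hp measurableSet_Ici Real.volume_Ici hψp hconst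

theorem deriv_eq_neg_smul_quarter_period
    (hψ : IsSchrodingerSolutionOn (fun _ ↦ -k ^ 2) (Set.Ici b) ψ ψ') (hk : 0 < k) {x : ℝ}
    (hx : x ∈ Set.Ici (b + Real.pi / (2 * k))) :
    ψ' x = -k • ψ (x - Real.pi / (2 * k)) := by
  set y := x - Real.pi / (2 * k)
  have hperiod : 0 < Real.pi / (2 * k) := by positivity
  have hphase : k * (x - y) = Real.pi / 2 := by
    simp only [y]
    field_simp
    ring
  simpa [wronskian, hphase] using (isSchrodingerSolutionOn_sin k y _).wronskian_eq hψ
    (convex_Ici b) (x := x) (y := y) (by grind) (by grind)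

theorem eqOn_zero_of_oscillating
    (hψ : IsSchrodingerSolutionOn (fun _ ↦ -k ^ 2) (Set.Ici b) ψ ψ') (hk : 0 < k)
    (hp₀ : p ≠ 0) (hp : p ≠ ⊤) (hψp : MemLp ψ p (volume.restrict (Set.Ici b))) :
    Set.EqOn ψ 0 (Set.Ici b) := by
  intro y hy
  set c := b + Real.pi / (2 * k)
  have hsub : Set.Ici c ⊆ Set.Ici b := Set.Ici_subset_Ici.2 (le_add_of_nonneg_right (by positivity))
  have hψ'p : MemLp ψ' p (volume.restrict (Set.Ici c)) := by
    refine ((memLp_comp_sub_const_Ici hψp _).const_smul (-k)).ae_eq ?_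
    exact (Set.EqOn.aeEq_restrict (fun x hx ↦ hψ.deriv_eq_neg_smul_quarter_period hk hx)
      measurableSet_Ici).symm
  have hsin : MemLp (fun x ↦ Real.sin (k * (x - y))) ⊤ (volume.restrict (Set.Ici c)) :=
    memLp_top_of_bound (by fun_prop) 1 (.of_forall fun x ↦ Real.abs_sin_le_one _)
  have hcos : MemLp (fun x ↦ Real.cos (k * (x - y))) ⊤ (volume.restrict (Set.Ici c)) :=
    memLp_top_of_bound (by fun_prop) 1 (.of_forall fun x ↦ Real.abs_cos_le_one _)
  have hψc := hψp.mono_measure (Measure.restrict_mono hsub le_rfl)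
  have hwronskian := eq_zero_of_memLp_of_eqOn_const hp₀ hp measurableSet_Ici Real.volume_Ici
    (memLp_wronskian hsin (hcos.const_mul k) hψc hψ'p) fun x hx ↦
      (isSchrodingerSolutionOn_sin k y _).wronskian_eq hψ (convex_Ici b) (hsub hx) hy
  simpa [wronskian, hk.ne'] using hwronskian

theorem eqOn_zero_of_nonneg {lam : ℝ}
    (hψ : IsSchrodingerSolutionOn (fun _ ↦ -lam) (Set.Ici b) ψ ψ') (hlam : 0 ≤ lam)
    (hp₀ : p ≠ 0) (hp : p ≠ ⊤) (hψp : MemLp ψ p (volume.restrict (Set.Ici b))) :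
    Set.EqOn ψ 0 (Set.Ici b) := by
  rcases hlam.eq_or_lt with rfl | hpos
  · rw [neg_zero] at hψ
    exact hψ.eqOn_zero_of_free hp₀ hp hψp
  · rw [← Real.sq_sqrt hlam] at hψ
    exact hψ.eqOn_zero_of_oscillating (Real.sqrt_pos.2 hpos) hp₀ hp hψp

theorem eq_zero_of_eqOn_Ici (hψ : IsSchrodingerSolutionOn W Set.univ ψ ψ') (hW : Continuous W)
    (hzero : Set.EqOn ψ 0 (Set.Ici b)) : ψ = 0 := by
  have hb : b ∈ Set.Ici b := Set.self_mem_Ici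
  refine hψ.eq_zero_of_initial_eq_zero hW (hzero hb) ?_
  exact (uniqueDiffOn_Ici b b hb).eq_deriv _
    ((hψ.hasDerivWithinAt b trivial).mono (Set.subset_univ _))
    ((hasDerivWithinAt_const b _ 0).congr hzero (hzero hb))

end IsSchrodingerSolutionOn

theorem eigenvalue_neg_general {V : ℝ → ℝ} (hV : Continuous V) {b : ℝ}
    (hsupp : Function.support V ⊆ Set.Iic b) {lam : ℝ} {ψ : ℝ → E} (hψ : Differentiable ℝ ψ)
    (hψ' : Differentiable ℝ (deriv ψ)) {p : ENNReal} (hp₀ : p ≠ 0) (hp : p ≠ ⊤)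
    (hψp : MemLp ψ p (volume.restrict (Set.Ici b))) (hψne : ∃ x, ψ x ≠ 0)
    (heq : ∀ x, -(deriv (deriv ψ) x) + V x • ψ x = lam • ψ x) : lam < 0 := by
  by_contra! hlam
  have hsol : IsSchrodingerSolutionOn (fun x ↦ V x - lam) Set.univ ψ (deriv ψ) :=
    ⟨fun x _ ↦ (hψ x).hasDerivAt.hasDerivWithinAt,
      fun x _ ↦ (hψ' x).hasDerivAt.hasDerivWithinAt.congr_deriv
        (by linear_combination (norm := module) -heq x)⟩
  have hfree : IsSchrodingerSolutionOn (fun _ ↦ -lam) (Set.Ici (b + 1)) ψ (deriv ψ) := by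
    refine hsol.congr_mono (Set.subset_univ _) fun x hx ↦ ?_
    have hVx : V x = 0 := Function.notMem_support.1 fun h ↦ by grind
    simp [hVx]
  have hzero : Set.EqOn ψ 0 (Set.Ici (b + 1)) := hfree.eqOn_zero_of_nonneg hlam hp₀ hp
    (hψp.mono_measure (Measure.restrict_mono (Set.Ici_subset_Ici.2 (by simp)) le_rfl))
  obtain ⟨x, hx⟩ := hψne
  exact hx (congrFun (hsol.eq_zero_of_eqOn_Ici (by fun_prop) hzero) x)

/-- Every `L²` eigenvalue of the one-dimensional Schrödinger operator `H = -d²/dx² + V`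
with compactly supported continuous real potential `V` is strictly negative. -/
theorem eigenvalue_neg (L : ℝ) (hL : 0 < L)
    (V : ℝ → ℝ) (hV : Continuous V) (hsupp : Function.support V ⊆ Set.Icc (-L) L)
    (lam : ℝ) (ψ : ℝ → ℂ) (hψ : ContDiff ℝ 2 ψ)
    (hψL2 : MemLp ψ 2 (volume : Measure ℝ))
    (hψne : ∃ x : ℝ, ψ x ≠ 0)
    (heq : ∀ x : ℝ, -(deriv (deriv ψ) x) + (V x : ℂ) * ψ x = (lam : ℂ) * ψ x) :
    lam < 0 :=
  eigenvalue_neg_general hV (hsupp.trans Set.Icc_subset_Iic_self) (hψ.differentiable two_ne_zero)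
    hψ.differentiable_deriv_two two_ne_zero ENNReal.ofNat_ne_top (hψL2.restrict _) hψne heq
end
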